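/- arXiv:2009.11682 — 2 statements merged into one kernel-verified Lean document; each statement's English description precedes it below -/
import Mathlib

section
/- Any non-isotropic subsystem of a trigonometric ∨-system is again a trigonometric ∨-system. Precisely: let (𝒜,c) be a trigonometric ∨-system in V = ℂ^N, W ⊆ V* a linear subspace, and B = 𝒜 ∩ W a non-isotropic subsystem with span(B) = W. Then for every α ∈ B and every α-series Γ of B (the equivalence classes of B∖δ_α^B under γ₁ ∼ γ₂ iff γ₁±γ₂ ∈ ℤα, where δ_α^B = {γ ∈ B : γ proportional to α}), one has Σ_{β∈Γ} c_β α(β^{∨_B})·(α∧β) = 0, where β^{∨_B} ∈ W^∨ is the unique vector with G_B(β^{∨_B}, u) = β(u) for all u ∈ W^∨. -/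
open scoped Classical
open Finset

noncomputable section

/-- Evaluation of a covector `α` on a vector `x` in `ℂ^N`. -/
def ev {N : ℕ} (α x : Fin N → ℂ) : ℂ := ∑ i, α i * x i

/-- The bilinear form `G_𝒜` associated to a configuration. -/
def Gform {N : ℕ} (A : Finset (Fin N → ℂ)) (c : (Fin N → ℂ) → ℂ)
    (u v : Fin N → ℂ) : ℂ :=
  ∑ α ∈ A, c α * ev α u * ev α v

/-- `(α ∧ β)(a, b) = α(a)β(b) - α(b)β(a)`. -/
def wedge {N : ℕ} (α β a b : Fin N → ℂ) : ℂ :=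
  ev α a * ev β b - ev α b * ev β a

/-- Non-degeneracy of `G_𝒜`. -/
def Nondeg {N : ℕ} (A : Finset (Fin N → ℂ)) (c : (Fin N → ℂ) → ℂ) : Prop :=
  ∀ u : Fin N → ℂ, (∀ v : Fin N → ℂ, Gform A c u v = 0) → u = 0

/-- `dual` assigns to each covector `γ ∈ 𝒜` its `G_𝒜`-dual vector `γ^∨`. -/
def IsDual {N : ℕ} (A : Finset (Fin N → ℂ)) (c : (Fin N → ℂ) → ℂ)
    (dual : (Fin N → ℂ) → Fin N → ℂ) : Prop :=
  ∀ γ ∈ A, ∀ v : Fin N → ℂ, Gform A c (dual γ) v = ev γ v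

/-- `γ` is proportional to `α`. -/
def Collin {N : ℕ} (α γ : Fin N → ℂ) : Prop := ∃ t : ℂ, γ = t • α

/-- `γ₁ ∼ γ₂` iff `γ₁ + γ₂` or `γ₁ - γ₂` is an integer multiple of `α`. -/
def SeriesRel {N : ℕ} (α γ₁ γ₂ : Fin N → ℂ) : Prop :=
  ∃ m : ℤ, γ₁ + γ₂ = (m : ℂ) • α ∨ γ₁ - γ₂ = (m : ℂ) • α

/-- `Γ` is an (maximal) `α`-series of the configuration `A`. -/
def IsSeries {N : ℕ} (A : Finset (Fin N → ℂ)) (α : Fin N → ℂ)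
    (Γ : Finset (Fin N → ℂ)) : Prop :=
  Γ.Nonempty ∧ (∀ γ ∈ Γ, γ ∈ A ∧ ¬ Collin α γ) ∧
    (∀ γ₁ ∈ Γ, ∀ γ₂ ∈ Γ, SeriesRel α γ₁ γ₂) ∧
    (∀ β ∈ A, ¬ Collin α β → (∃ γ ∈ Γ, SeriesRel α β γ) → β ∈ Γ)

/-- The trigonometric ∨-conditions. -/
def IsTrigVSystem {N : ℕ} (A : Finset (Fin N → ℂ)) (c : (Fin N → ℂ) → ℂ)
    (dual : (Fin N → ℂ) → Fin N → ℂ) : Prop :=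
  ∀ α ∈ A, ∀ Γ : Finset (Fin N → ℂ), IsSeries A α Γ →
    ∀ a b : Fin N → ℂ, ∑ β ∈ Γ, c β * ev α (dual β) * wedge α β a b = 0

/-- The form `G^{(1)}_𝒜` evaluated at `(u, v)`. -/
def G1form {N : ℕ} (A : Finset (Fin N → ℂ)) (c : (Fin N → ℂ) → ℂ)
    (u v : Fin N → ℂ) : ℂ :=
  ∑ α ∈ A, ∑ β ∈ A, c α * c β * wedge α β u v ^ 2

/-- The form `G^{(2)}_𝒜` evaluated at `(u, v)`. -/
def G2form {N : ℕ} (A : Finset (Fin N → ℂ)) (c : (Fin N → ℂ) → ℂ)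
    (dual : (Fin N → ℂ) → Fin N → ℂ) (u v : Fin N → ℂ) : ℂ :=
  ∑ α ∈ A, ∑ β ∈ A,
    c α * c β * Gform A c (dual α) (dual β) * wedge α β u v ^ 2

/-- Complex cotangent. -/
def ccot (z : ℂ) : ℂ := Complex.cos z / Complex.sin z

/-- The matrix `F_i(x)` of third derivatives of the prepotential, `1 ≤ i ≤ N`. -/
def Fmat {N : ℕ} (A : Finset (Fin N → ℂ)) (c : (Fin N → ℂ) → ℂ) (lam : ℂ)
    (i : Fin N) (x : Fin N → ℂ) : Matrix (Fin N ⊕ Unit) (Fin N ⊕ Unit) ℂ :=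
  Matrix.of fun p q =>
    match p, q with
    | Sum.inl p, Sum.inl q => lam * ∑ α ∈ A, c α * α i * α p * α q * ccot (ev α x)
    | Sum.inl p, Sum.inr _ => 2 * ∑ α ∈ A, c α * α i * α p
    | Sum.inr _, Sum.inl q => 2 * ∑ α ∈ A, c α * α i * α q
    | Sum.inr _, Sum.inr _ => 0

/-- The constant matrix `F_{N+1}`. -/
def Flast {N : ℕ} (A : Finset (Fin N → ℂ)) (c : (Fin N → ℂ) → ℂ) :
    Matrix (Fin N ⊕ Unit) (Fin N ⊕ Unit) ℂ :=
  Matrix.of fun p q =>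
    match p, q with
    | Sum.inl p, Sum.inl q => 2 * ∑ α ∈ A, c α * α p * α q
    | Sum.inr _, Sum.inr _ => 2
    | _, _ => 0

/-- `(𝒜, c, λ)` satisfies the trigonometric WDVV equations. -/
def SatisfiesWDVV {N : ℕ} (A : Finset (Fin N → ℂ)) (c : (Fin N → ℂ) → ℂ)
    (lam : ℂ) : Prop :=
  IsUnit (Flast A c) ∧
    ∀ x : Fin N → ℂ, (∀ α ∈ A, Complex.sin (ev α x) ≠ 0) →
      ∀ i j : Fin N,
        Fmat A c lam i x * (Flast A c)⁻¹ * Fmat A c lam j x =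
          Fmat A c lam j x * (Flast A c)⁻¹ * Fmat A c lam i x

/-- The covectors of `𝒜` lie in a lattice of full rank `N` in `(ℂ^N)^*`. -/
def InLattice {N : ℕ} (A : Finset (Fin N → ℂ)) : Prop :=
  ∃ L : Fin N → Fin N → ℂ, LinearIndependent ℂ L ∧
    ∀ α ∈ A, ∃ m : Fin N → ℤ, α = ∑ i, (m i : ℂ) • L i

/-- No two covectors of `𝒜` are negatively proportional. -/
def PositiveSystem {N : ℕ} (A : Finset (Fin N → ℂ)) : Prop :=
  ∀ α ∈ A, ∀ t : ℝ, t < 0 → (t : ℂ) • α ∉ A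

/-- The operator `M(v) = Σ_{β ∈ B} c_β β(v) β^∨`. -/
def Mop {N : ℕ} (B : Finset (Fin N → ℂ)) (c : (Fin N → ℂ) → ℂ)
    (dual : (Fin N → ℂ) → Fin N → ℂ) (v : Fin N → ℂ) : Fin N → ℂ :=
  ∑ β ∈ B, (c β * ev β v) • dual β

/-- `W^∨ = span{β^∨ : β ∈ B}`. -/
def Wdual {N : ℕ} (B : Finset (Fin N → ℂ))
    (dual : (Fin N → ℂ) → Fin N → ℂ) : Submodule ℂ (Fin N → ℂ) :=
  Submodule.span ℂ (dual '' (B : Set (Fin N → ℂ)))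

/-- `B` is non-isotropic: the restriction of `G_B` to `W^∨` is non-degenerate. -/
def NonIsotropic {N : ℕ} (B : Finset (Fin N → ℂ)) (c : (Fin N → ℂ) → ℂ)
    (dual : (Fin N → ℂ) → Fin N → ℂ) : Prop :=
  ∀ u ∈ Wdual B dual, (∀ v ∈ Wdual B dual, Gform B c u v = 0) → u = 0
theorem aux_ev_smul_left {N : ℕ} (t : ℂ) (α x : Fin N → ℂ) : ev (t • α) x = t * ev α x := by
  simp [ev, Finset.mul_sum, mul_assoc]

theorem aux_ev_smul_right {N : ℕ} (t : ℂ) (α x : Fin N → ℂ) : ev α (t • x) = t * ev α x := by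
  simp only [ev, Finset.mul_sum, Pi.smul_apply, smul_eq_mul]
  exact Finset.sum_congr rfl fun i _ => by ring

theorem aux_ev_sub_right {N : ℕ} (α x y : Fin N → ℂ) : ev α (x - y) = ev α x - ev α y := by
  simp [ev, mul_sub]

theorem aux_Gform_comm {N : ℕ} (A : Finset (Fin N → ℂ)) (c : (Fin N → ℂ) → ℂ)
    (u v : Fin N → ℂ) : Gform A c u v = Gform A c v u :=
  Finset.sum_congr rfl fun i _ => by ring

theorem aux_Gform_sub_smul {N : ℕ} (A : Finset (Fin N → ℂ)) (c : (Fin N → ℂ) → ℂ)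
    (t : ℂ) (x y v : Fin N → ℂ) :
    Gform A c (x - t • y) v = Gform A c x v - t * Gform A c y v := by
  simp only [Gform, Finset.mul_sum, ← Finset.sum_sub_distrib, aux_ev_sub_right,
    aux_ev_smul_right]
  exact Finset.sum_congr rfl fun i _ => by ring

theorem aux_ne_zero {N : ℕ} (α : Fin N → ℂ) (h : ∀ v, ev α v = 0) : α = 0 := by
  funext i
  simpa [ev, Pi.single_apply] using h (Pi.single i 1)

/-- The series relation as a setoid. -/
def auxSetoid {N : ℕ} (α : Fin N → ℂ) : Setoid (Fin N → ℂ) where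
  r := SeriesRel α
  iseqv := by
    refine ⟨fun x => ⟨0, Or.inr (by simp)⟩, ?_, ?_⟩
    · rintro x y ⟨m, h | h⟩
      · exact ⟨m, Or.inl (by rw [add_comm]; exact h)⟩
      · refine ⟨-m, Or.inr ?_⟩
        rw [← neg_sub, h]; push_cast; rw [neg_smul]
    · rintro x y z ⟨m, h | h⟩ ⟨n, h' | h'⟩
      · refine ⟨m - n, Or.inr ?_⟩
        push_cast; rw [sub_smul, ← h, ← h']; abel
      · refine ⟨m - n, Or.inl ?_⟩
        push_cast; rw [sub_smul, ← h, ← h']; abel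
      · refine ⟨m + n, Or.inl ?_⟩
        push_cast; rw [add_smul, ← h, ← h']; abel
      · refine ⟨m + n, Or.inr ?_⟩
        push_cast; rw [add_smul, ← h, ← h']; abel

theorem aux_mem {N : ℕ} (W : Submodule ℂ (Fin N → ℂ)) {α β γ : Fin N → ℂ}
    (hα : α ∈ W) (hγ : γ ∈ W) (h : SeriesRel α β γ) : β ∈ W := by
  obtain ⟨m, h | h⟩ := h
  · rw [eq_sub_of_add_eq h]
    exact W.sub_mem (W.smul_mem _ hα) hγ
  · rw [eq_add_of_sub_eq h]
    exact W.add_mem (W.smul_mem _ hα) hγ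

/-- a non-isotropic subsystem of a trigonometric ∨-system is again a
trigonometric ∨-system (with respect to its own form `G_B` and duals `β^{∨_B}`). -/
theorem subsystem_is_trigVSystem {N : ℕ}
    (A : Finset (Fin N → ℂ)) (c : (Fin N → ℂ) → ℂ)
    (dual : (Fin N → ℂ) → Fin N → ℂ)
    (hA0 : ∀ α ∈ A, α ≠ (0 : Fin N → ℂ))
    (hnd : Nondeg A c)
    (hdual : IsDual A c dual)
    (hvsys : IsTrigVSystem A c dual)
    (W : Submodule ℂ (Fin N → ℂ)) (B : Finset (Fin N → ℂ))
    (hB : ∀ α : Fin N → ℂ, α ∈ B ↔ α ∈ A ∧ α ∈ W)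
    (hWspan : W = Submodule.span ℂ (B : Set (Fin N → ℂ)))
    (hiso : NonIsotropic B c dual)
    (dualB : (Fin N → ℂ) → Fin N → ℂ)
    (hdualB : ∀ β ∈ B, dualB β ∈ Wdual B dual ∧
      ∀ u ∈ Wdual B dual, Gform B c (dualB β) u = ev β u) :
    ∀ α ∈ B, ∀ Γ : Finset (Fin N → ℂ), IsSeries B α Γ →
      ∀ a b : Fin N → ℂ, ∑ β ∈ Γ, c β * ev α (dualB β) * wedge α β a b = 0 := by
  intro α hα Γ hΓ a b
  obtain ⟨hαA, hαW⟩ := (hB α).1 hα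
  -- series of `B` are series of `A`
  have hser : ∀ Γ, IsSeries B α Γ → IsSeries A α Γ := by
    rintro Γ ⟨h1, h2, h3, h4⟩
    refine ⟨h1, fun γ hγ => ⟨((hB γ).1 (h2 γ hγ).1).1, (h2 γ hγ).2⟩, h3, ?_⟩
    rintro β hβ hc ⟨γ, hγ, hr⟩
    exact h4 β ((hB β).2 ⟨hβ, aux_mem W hαW ((hB γ).1 (h2 γ hγ).1).2 hr⟩) hc ⟨γ, hγ, hr⟩
  -- the sum over the whole of `B`
  have hsum : ∀ a b, ∑ β ∈ B, c β * ev α (dual β) * wedge α β a b = 0 := by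
    intro a b
    rw [← Finset.sum_filter_add_sum_filter_not B (fun β => Collin α β)]
    have h1 : ∑ β ∈ B with Collin α β, c β * ev α (dual β) * wedge α β a b = 0 := by
      refine Finset.sum_eq_zero fun β hβ => ?_
      obtain ⟨t, rfl⟩ := (Finset.mem_filter.1 hβ).2
      simp only [wedge, aux_ev_smul_left]
      ring
    rw [h1, zero_add]
    refine Finset.sum_cancels_of_partition_cancels (auxSetoid α) fun x hx => ?_
    refine hvsys α hαA _ (hser _ ⟨⟨x, ?_⟩, ?_, ?_, ?_⟩) a b
    · exact Finset.mem_filter.2 ⟨hx, (auxSetoid α).refl x⟩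
    · intro γ hγ
      exact Finset.mem_filter.1 (Finset.mem_filter.1 hγ).1
    · intro γ₁ h₁ γ₂ h₂
      exact (auxSetoid α).trans (Finset.mem_filter.1 h₁).2
        ((auxSetoid α).symm (Finset.mem_filter.1 h₂).2)
    · rintro β hβ hc ⟨γ, hγ, hr⟩
      exact Finset.mem_filter.2 ⟨Finset.mem_filter.2 ⟨hβ, hc⟩,
        (auxSetoid α).trans hr (Finset.mem_filter.1 hγ).2⟩
  -- symmetry
  have hsym : ∀ β ∈ B, ev β (dual α) = ev α (dual β) := by
    intro β hβ
    rw [← hdual β ((hB β).1 hβ).1, ← hdual α hαA, aux_Gform_comm]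
  have hsymB : ∀ β ∈ B, ev β (dualB α) = ev α (dualB β) := by
    intro β hβ
    rw [← (hdualB β hβ).2 _ (hdualB α hα).1, ← (hdualB α hα).2 _ (hdualB β hβ).1, aux_Gform_comm]
  -- eigenvector property
  obtain ⟨a₀, ha₀⟩ : ∃ a₀, ev α a₀ ≠ 0 := by
    by_contra! h
    exact hA0 α hαA (aux_ne_zero α h)
  have hG : ∀ v, Gform B c (dual α) v = ∑ β ∈ B, c β * ev α (dual β) * ev β v := by
    intro v
    exact Finset.sum_congr rfl fun β hβ => by rw [hsym β hβ]
  obtain ⟨l, hl⟩ : ∃ l : ℂ, ∀ v, Gform B c (dual α) v = l * ev α v := by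
    refine ⟨Gform B c (dual α) a₀ / ev α a₀, fun v => ?_⟩
    have h := hsum a₀ v
    have h' : ev α a₀ * Gform B c (dual α) v - ev α v * Gform B c (dual α) a₀ = 0 := by
      rw [← h, hG, hG, Finset.mul_sum, Finset.mul_sum, ← Finset.sum_sub_distrib]
      exact Finset.sum_congr rfl fun β _ => by simp only [wedge]; ring
    field_simp
    linear_combination h'
  have hmem : dual α ∈ Wdual B dual := Submodule.subset_span ⟨α, hα, rfl⟩
  have heq : dual α = l • dualB α := by
    rw [← sub_eq_zero]
    refine hiso _ (Submodule.sub_mem _ hmem (Submodule.smul_mem _ _ (hdualB α hα).1)) ?_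
    intro v hv
    rw [aux_Gform_sub_smul, hl, (hdualB α hα).2 v hv, sub_self]
  have hl0 : l ≠ 0 := by
    rintro rfl
    apply ha₀
    rw [← hdual α hαA, heq]
    simp [Gform, ev]
  have hmain := hvsys α hαA Γ (hser Γ hΓ) a b
  refine (mul_eq_zero.1 (?_ : l * _ = 0)).resolve_left hl0
  rw [← hmain, Finset.mul_sum]
  refine Finset.sum_congr rfl fun β hβ => ?_
  have hβB := (hΓ.2.1 β hβ).1
  rw [← hsymB β hβB, ← hsym β hβB, heq, aux_ev_smul_right]
  ring

end
end

section
/- For every N ≥ 1, all r, s, q ∈ ℂ and all u, v ∈ ℂ^N, one has Σ_{α,β ∈ BC_N⁺} c_α c_β (α(u)β(v) − α(v)β(u))² = 2h² · Σ_{1≤i<j≤N} (u_i v_j − u_j v_i)², where the sum is over all ordered pairs (α,β) of covectors of BC_N⁺(r,s,q) and h = r + 4s + 2q(N−1). -/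
open Finset

noncomputable section

/-- The standard covector `e^i` of `(ℂ^N)^*`. -/
def esgl (N : ℕ) (i : Fin N) : Fin N → ℂ := Pi.single i 1

/-- The weighted sum `Σ_{α ∈ BC_N⁺} c_α f(α)` over the configuration `BC_N⁺(r,s,q)`,
whose covectors are `e^i` (weight `r`), `2e^i` (weight `s`) and `e^i ± e^j`, `i < j`
(weight `q`). -/
def bcSum (N : ℕ) (r s q : ℂ) (f : (Fin N → ℂ) → ℂ) : ℂ :=
  (∑ i, r * f (esgl N i)) + (∑ i, s * f ((2 : ℂ) • esgl N i)) +
    ∑ p ∈ Finset.univ.filter (fun p : Fin N × Fin N => p.1 < p.2),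
      (q * f (esgl N p.1 + esgl N p.2) + q * f (esgl N p.1 - esgl N p.2))

lemma sum_lt_symm {N : ℕ} (F : Fin N → Fin N → ℂ) :
    ∑ p ∈ Finset.univ.filter (fun p : Fin N × Fin N => p.1 < p.2), (F p.1 p.2 + F p.2 p.1) =
      (∑ i, ∑ j, F i j) - ∑ i, F i i := by
  have h1 : ∑ p ∈ Finset.univ.filter (fun p : Fin N × Fin N => p.1 < p.2), (F p.1 p.2 + F p.2 p.1)
      = ∑ i, ∑ j, ((if i < j then F i j else 0) + (if j < i then F i j else 0)) := by
    rw [Finset.sum_filter, Fintype.sum_prod_type]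
    simp only [Finset.sum_add_distrib]
    rw [Finset.sum_comm (f := fun i j : Fin N => if j < i then F i j else 0)]
    simp only [← Finset.sum_add_distrib]
    refine Finset.sum_congr rfl fun i _ => Finset.sum_congr rfl fun j _ => ?_
    split_ifs <;> simp
  have h2 : ∑ i, F i i = ∑ i, ∑ j, if i = j then F i j else 0 := by simp
  rw [h1, h2, ← Finset.sum_sub_distrib]
  refine Finset.sum_congr rfl fun i _ => ?_
  rw [← Finset.sum_sub_distrib]
  refine Finset.sum_congr rfl fun j _ => ?_
  rcases lt_trichotomy i j with h | h | h
  · simp [h, h.ne, h.not_gt]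
  · simp [h]
  · simp [h, h.ne', h.not_gt]

lemma ev_esgl {N : ℕ} (i : Fin N) (x : Fin N → ℂ) : ev (esgl N i) x = x i := by
  simp [ev, esgl, Pi.single_apply]

lemma ev_add' {N : ℕ} (a b x : Fin N → ℂ) : ev (a + b) x = ev a x + ev b x := by
  simp [ev, add_mul, Finset.sum_add_distrib]

lemma ev_sub' {N : ℕ} (a b x : Fin N → ℂ) : ev (a - b) x = ev a x - ev b x := by
  simp [ev, sub_mul, Finset.sum_sub_distrib]

lemma ev_smul' {N : ℕ} (c : ℂ) (b x : Fin N → ℂ) : ev (c • b) x = c * ev b x := by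
  simp [ev, mul_assoc, Finset.mul_sum]

lemma bcSum_quad (N : ℕ) (r s q : ℂ) (u v : Fin N → ℂ) (A B C : ℂ) :
    bcSum N r s q (fun α => A * ev α u ^ 2 + B * (ev α u * ev α v) + C * ev α v ^ 2) =
    (r + 4 * s + 2 * q * ((N : ℂ) - 1)) *
      (A * ∑ i, u i ^ 2 + B * ∑ i, u i * v i + C * ∑ i, v i ^ 2) := by
  have key := sum_lt_symm (N := N)
    (fun i _ => 2 * q * (A * u i ^ 2 + B * (u i * v i) + C * v i ^ 2))
  have e : A * ∑ i, u i ^ 2 + B * ∑ i, u i * v i + C * ∑ i, v i ^ 2 =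
      ∑ i, (A * u i ^ 2 + B * (u i * v i) + C * v i ^ 2) := by
    simp only [Finset.sum_add_distrib, Finset.mul_sum]
  rw [e]
  unfold bcSum
  simp only [ev_add', ev_sub', ev_smul', ev_esgl]
  have e2 : ∀ i, s * (A * (2 * u i) ^ 2 + B * (2 * u i * (2 * v i)) + C * (2 * v i) ^ 2) =
      4 * s * (A * u i ^ 2 + B * (u i * v i) + C * v i ^ 2) := fun i => by ring
  simp only [e2]
  simp only [Finset.sum_const, Finset.card_univ, Fintype.card_fin, nsmul_eq_mul,
    ← Finset.mul_sum] at key ⊢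
  rw [show (r + 4 * s + 2 * q * ((N : ℂ) - 1)) *
      ∑ i, (A * u i ^ 2 + B * (u i * v i) + C * v i ^ 2) =
      r * ∑ i, (A * u i ^ 2 + B * (u i * v i) + C * v i ^ 2) +
      4 * s * ∑ i, (A * u i ^ 2 + B * (u i * v i) + C * v i ^ 2) +
      ((N : ℂ) * (2 * q * ∑ i, (A * u i ^ 2 + B * (u i * v i) + C * v i ^ 2)) -
        2 * q * ∑ i, (A * u i ^ 2 + B * (u i * v i) + C * v i ^ 2)) by ring]
  congr 1
  rw [← key]
  refine Finset.sum_congr rfl fun p _ => ?_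
  ring

lemma lagrange' {N : ℕ} (u v : Fin N → ℂ) :
    ∑ p ∈ Finset.univ.filter (fun p : Fin N × Fin N => p.1 < p.2),
        (u p.1 * v p.2 - u p.2 * v p.1) ^ 2 =
      (∑ i, u i ^ 2) * (∑ i, v i ^ 2) - (∑ i, u i * v i) ^ 2 := by
  have key := sum_lt_symm (N := N)
    (fun i j => u i ^ 2 * v j ^ 2 - (u i * v i) * (u j * v j))
  have e : ∀ i, u i ^ 2 * v i ^ 2 - (u i * v i) * (u i * v i) = 0 := fun i => by ring
  simp only [e, Finset.sum_const_zero, sub_zero, Finset.sum_sub_distrib] at key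
  rw [sq (∑ i, u i * v i), Finset.sum_mul_sum, Finset.sum_mul_sum, ← key]
  refine Finset.sum_congr rfl fun p _ => ?_
  ring

/-- the form `G^{(1)}` of the configuration `BC_N⁺(r,s,q)` equals
`2h² Σ_{i<j} (e^i ∧ e^j)²` with `h = r + 4s + 2q(N-1)`. -/
theorem BC_G1_identity (N : ℕ) (hN : 1 ≤ N) (r s q : ℂ) (u v : Fin N → ℂ) :
    bcSum N r s q (fun α => bcSum N r s q (fun β => wedge α β u v ^ 2)) =
    2 * (r + 4 * s + 2 * q * ((N : ℂ) - 1)) ^ 2 *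
      ∑ p ∈ Finset.univ.filter (fun p : Fin N × Fin N => p.1 < p.2),
        (u p.1 * v p.2 - u p.2 * v p.1) ^ 2 := by
  have h1 : ∀ α : Fin N → ℂ, bcSum N r s q (fun β => wedge α β u v ^ 2) =
      ((r + 4 * s + 2 * q * ((N : ℂ) - 1)) * ∑ i, v i ^ 2) * ev α u ^ 2 +
      (-2 * (r + 4 * s + 2 * q * ((N : ℂ) - 1)) * ∑ i, u i * v i) * (ev α u * ev α v) +
      ((r + 4 * s + 2 * q * ((N : ℂ) - 1)) * ∑ i, u i ^ 2) * ev α v ^ 2 := by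
    intro α
    have h := bcSum_quad N r s q u v (ev α v ^ 2) (-2 * (ev α u * ev α v)) (ev α u ^ 2)
    have e : (fun β => wedge α β u v ^ 2) = (fun β => ev α v ^ 2 * ev β u ^ 2 +
        -2 * (ev α u * ev α v) * (ev β u * ev β v) + ev α u ^ 2 * ev β v ^ 2) := by
      funext β
      unfold wedge
      ring
    rw [e, h]
    ring
  simp only [h1]
  rw [bcSum_quad, lagrange']
  ring

end
end
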